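/- arXiv:1907.01379 — 4 statements merged into one kernel-verified Lean document; each statement's English description precedes it below -/
import Mathlib

section
/- Let X be a compact metric space with a Borel probability measure μ, and let K : X × X → ℝ be a continuous symmetric kernel that is positive semi-definite in the finite-sum sense, i.e. Σ_{i=1}^{m} Σ_{j=1}^{m} c_i c_j K(x_i, x_j) ≥ 0 for all m ∈ ℕ, x_1, …, x_m ∈ X and c_1, …, c_m ∈ ℝ. Then the associated integral operator is positive semi-definite: for every f ∈ L²(X, μ), ∫_X ∫_X K(x, s) f(x) f(s) μ(dx) μ(ds) ≥ 0. -/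
open MeasureTheory

theorem psd_aux_finset {X : Type*} (K : X × X → ℝ)
    (hKpsd : ∀ (m : ℕ) (x : Fin m → X) (c : Fin m → ℝ),
      0 ≤ ∑ i : Fin m, ∑ j : Fin m, c i * c j * K (x i, x j))
    (t : Finset X) (c : X → ℝ) :
    0 ≤ ∑ a ∈ t, ∑ b ∈ t, c a * c b * K (a, b) := by
  have h := hKpsd t.card (fun i => (t.equivFin.symm i : X)) (fun i => c (t.equivFin.symm i))
  rw [← Finset.sum_coe_sort t]
  simp_rw [← Finset.sum_coe_sort t (fun b => c _ * c b * K (_, b))]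
  rw [← t.equivFin.symm.sum_comp]
  simp_rw [← t.equivFin.symm.sum_comp (fun b : t => c _ * c b * K (_, (b : X)))]
  exact h

theorem psd_aux_simple {X : Type*} [MeasurableSpace X] (μ : Measure X)
    (g : SimpleFunc X X) (f : X → ℝ) (hf : Integrable f μ) (h : X → ℝ) :
    ∫ s, h (g s) * f s ∂μ = ∑ b ∈ g.range, h b * ∫ s in g ⁻¹' {b}, f s ∂μ := by
  classical
  have e : ∀ s, h (g s) * f s = ∑ b ∈ g.range, h b * (g ⁻¹' {b}).indicator f s := by
    intro s
    rw [Finset.sum_eq_single (g s)]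
    · simp
    · intro b _ hb
      rw [Set.indicator_of_notMem, mul_zero]
      simpa using hb.symm
    · intro hs
      exact absurd (g.mem_range_self s) hs
  simp_rw [e]
  rw [integral_finsetSum]
  · refine Finset.sum_congr rfl fun b _ => ?_
    rw [integral_const_mul, integral_indicator (g.measurableSet_preimage _)]
  · intro b _
    exact (hf.indicator (g.measurableSet_preimage _)).const_mul _

/-- **Theorem.**  Let `X` be a compact metric space with Borel probability
measure `μ`, and let `K : X × X → ℝ` be a continuous symmetric kernel that is
positive semi-definite in the finite-sum sense.  Then the associated integral
operator is positive semi-definite: `∫∫ K(x,s) f(x) f(s) dμ dμ ≥ 0` for every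
`f ∈ L²(X, μ)`. -/
theorem finite_psd_kernel_implies_psd_operator
    {X : Type*} [MetricSpace X] [CompactSpace X]
    [MeasurableSpace X] [BorelSpace X]
    (μ : Measure X) [IsProbabilityMeasure μ]
    (K : X × X → ℝ) (hKcont : Continuous K)
    (hKsymm : ∀ x s : X, K (x, s) = K (s, x))
    (hKpsd : ∀ (m : ℕ) (x : Fin m → X) (c : Fin m → ℝ),
      0 ≤ ∑ i : Fin m, ∑ j : Fin m, c i * c j * K (x i, x j)) :
    ∀ f : X → ℝ, MemLp f 2 μ →
      0 ≤ ∫ x, ∫ s, K (x, s) * f x * f s ∂μ ∂μ := by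
  intro f hf2
  have hf : Integrable f μ := hf2.integrable (by norm_num)
  have : Nonempty X := μ.nonempty_of_neZero
  obtain ⟨y⟩ := this
  obtain ⟨C, hC⟩ : ∃ C, ∀ z, ‖K z‖ ≤ C := by
    obtain ⟨C, hC⟩ := isCompact_univ.exists_bound_of_continuousOn hKcont.continuousOn
    exact ⟨C, fun z => hC z (Set.mem_univ z)⟩
  let g : ℕ → SimpleFunc X X := fun n =>
    SimpleFunc.approxOn id measurable_id Set.univ y (Set.mem_univ y) n
  have hg : ∀ x, Filter.Tendsto (fun n => g n x) Filter.atTop (nhds x) := fun x =>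
    SimpleFunc.tendsto_approxOn measurable_id (Set.mem_univ y) (by simp)
  have hff : Integrable (fun z : X × X => f z.1 * f z.2) (μ.prod μ) := hf.mul_prod hf
  have hint : ∀ k : X × X → X × X, Measurable k →
      Integrable (fun z : X × X => K (k z) * f z.1 * f z.2) (μ.prod μ) := by
    intro k hk
    have := hff.bdd_mul (f := fun z => K (k z)) (c := C)
      (hKcont.measurable.comp hk).aestronglyMeasurable
      (Filter.Eventually.of_forall fun z => hC _)
    simpa only [mul_assoc] using this
  have hgm : ∀ n, Measurable (fun z : X × X => (g n z.1, g n z.2)) := fun n =>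
    ((g n).measurable.comp measurable_fst).prodMk ((g n).measurable.comp measurable_snd)
  have hlim : Filter.Tendsto
      (fun n => ∫ z : X × X, K (g n z.1, g n z.2) * f z.1 * f z.2 ∂(μ.prod μ)) Filter.atTop
      (nhds (∫ z : X × X, K z * f z.1 * f z.2 ∂(μ.prod μ))) := by
    refine tendsto_integral_of_dominated_convergence
      (fun z => C * ‖f z.1 * f z.2‖) (fun n => (hint _ (hgm n)).aestronglyMeasurable)
      (hff.norm.const_mul C) (fun n => Filter.Eventually.of_forall fun z => ?_)
      (Filter.Eventually.of_forall fun z => ?_)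
    · rw [mul_assoc, norm_mul]
      exact mul_le_mul_of_nonneg_right (hC _) (norm_nonneg _)
    · refine Filter.Tendsto.mul_const _ (Filter.Tendsto.mul_const _ ?_)
      exact (hKcont.tendsto z).comp ((hg z.1).prodMk_nhds (hg z.2))
  have key : 0 ≤ ∫ z : X × X, K z * f z.1 * f z.2 ∂(μ.prod μ) := by
    refine ge_of_tendsto' hlim fun n => ?_
    rw [integral_prod _ (hint _ (hgm n))]
    have e1 : ∀ x, ∫ s, K (g n x, g n s) * f x * f s ∂μ
        = (fun a => ∑ b ∈ (g n).range, K (a, b) * ∫ s in (g n) ⁻¹' {b}, f s ∂μ) (g n x)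
          * f x := by
      intro x
      have := psd_aux_simple μ (g n) f hf (fun b => K (g n x, b) * f x)
      simp only at this ⊢
      rw [this, Finset.sum_mul]
      exact Finset.sum_congr rfl fun b _ => by ring
    simp only [e1]
    rw [psd_aux_simple μ (g n) f hf
      (fun a => ∑ b ∈ (g n).range, K (a, b) * ∫ s in (g n) ⁻¹' {b}, f s ∂μ)]
    refine (psd_aux_finset K hKpsd (g n).range
      (fun a => ∫ s in (g n) ⁻¹' {a}, f s ∂μ)).trans_eq ?_
    refine Finset.sum_congr rfl fun a _ => ?_
    rw [Finset.sum_mul]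
    exact Finset.sum_congr rfl fun b _ => by ring
  exact key.trans_eq (integral_prod _ (hint id measurable_id))
end

section
/- Let (X, d) be a compact metric space with Borel probability measure μ. Suppose λ_1 ≥ λ_2 ≥ … ≥ 0 is a summable sequence of nonnegative reals and φ_1, φ_2, … : X → ℝ are continuous functions forming an orthonormal system in L²(X, μ), such that the series Σ_{i=1}^∞ λ_i φ_i(x) φ_i(s) converges uniformly on X × X (to a continuous kernel K̂). Then for every x ∈ X the sequence f(x) = (√λ_1 φ_1(x), √λ_2 φ_2(x), √λ_3 φ_3(x), …) belongs to ℓ², and the resulting map f : X → ℓ² is continuous. -/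
open MeasureTheory Filter

/-- **Theorem (continuity of the MDS embedding).**  Given eigendata
`λ 0 ≥ λ 1 ≥ … ≥ 0` (summable) and continuous orthonormal eigenfunctions
`φ i`, with `∑ᵢ λᵢ φᵢ(x) φᵢ(s)` converging uniformly on `X × X` to a kernel
`K̂`, the sequence `(√λᵢ φᵢ(x))ᵢ` is square-summable for each `x` and the
resulting MDS embedding `f : X → ℓ²` is continuous. -/
theorem mds_embedding_continuous
    {X : Type*} [MetricSpace X] [CompactSpace X]
    [MeasurableSpace X] [BorelSpace X]
    (μ : Measure X) [IsProbabilityMeasure μ]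
    (lam : ℕ → ℝ) (hnonneg : ∀ i, 0 ≤ lam i)
    (hdec : ∀ i, lam (i + 1) ≤ lam i) (hsum : Summable lam)
    (φ : ℕ → X → ℝ) (hcont : ∀ i, Continuous (φ i))
    (hL2 : ∀ i, MemLp (φ i) 2 μ)
    (hortho : ∀ i j : ℕ, ∫ x, φ i x * φ j x ∂μ = if i = j then 1 else 0)
    (Khat : X × X → ℝ)
    (hunif : TendstoUniformly
      (fun (N : ℕ) (p : X × X) => ∑ i ∈ Finset.range N, lam i * φ i p.1 * φ i p.2)
      Khat atTop) :
    ∃ hmem : ∀ x : X, Memℓp (fun i : ℕ => Real.sqrt (lam i) * φ i x) 2,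
      Continuous (fun x : X =>
        (⟨fun i : ℕ => Real.sqrt (lam i) * φ i x, hmem x⟩ : lp (fun _ : ℕ => ℝ) 2)) := by
  have hsq : ∀ i x y, (Real.sqrt (lam i) * φ i x) * (Real.sqrt (lam i) * φ i y)
      = lam i * φ i x * φ i y := by
    intro i x y
    have h := Real.mul_self_sqrt (hnonneg i)
    linear_combination (φ i x * φ i y) * h
  have hK : Continuous Khat := by
    refine hunif.continuous (Frequently.of_forall fun N => ?_)
    refine continuous_finsetSum _ fun i _ => ?_
    exact (continuous_const.mul ((hcont i).comp continuous_fst)).mul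
      ((hcont i).comp continuous_snd)
  have hlim : ∀ x y, Tendsto (fun N : ℕ => ∑ i ∈ Finset.range N, lam i * φ i x * φ i y) atTop
      (nhds (Khat (x, y))) := fun x y => hunif.tendsto_at (x, y)
  have hmem : ∀ x : X, Memℓp (fun i : ℕ => Real.sqrt (lam i) * φ i x) 2 := by
    intro x
    apply memℓp_gen
    have h : HasSum (fun i => lam i * φ i x * φ i x) (Khat (x, x)) := by
      refine (hasSum_iff_tendsto_nat_of_nonneg (fun i => ?_) _).2 (hlim x x)
      rw [← hsq]
      exact mul_self_nonneg _
    refine h.summable.congr fun i => ?_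
    rw [← hsq]
    simp only [ENNReal.toReal_ofNat, Real.rpow_ofNat, Real.norm_eq_abs, sq_abs]
    ring
  refine ⟨hmem, ?_⟩
  set f : X → lp (fun _ : ℕ => ℝ) 2 :=
    fun x => ⟨fun i : ℕ => Real.sqrt (lam i) * φ i x, hmem x⟩ with hf
  have hinner : ∀ x y, inner ℝ (f x) (f y) = Khat (x, y) := by
    intro x y
    refine tendsto_nhds_unique (lp.hasSum_inner (𝕜 := ℝ) (f x) (f y)).tendsto_sum_nat ?_
    refine (hlim x y).congr fun N => Finset.sum_congr rfl fun i _ => ?_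
    rw [← hsq, mul_comm]
    rfl
  have hnorm : ∀ x y, ‖f x - f y‖ = Real.sqrt (Khat (x, x) - 2 * Khat (x, y) + Khat (y, y)) := by
    intro x y
    rw [← hinner, ← hinner, ← hinner, real_inner_self_eq_norm_sq, real_inner_self_eq_norm_sq,
      ← norm_sub_sq_real, Real.sqrt_sq (norm_nonneg _)]
  rw [continuous_iff_continuousAt]
  intro y
  rw [ContinuousAt, tendsto_iff_norm_sub_tendsto_zero]
  simp only [hnorm]
  have hc : Continuous fun x =>
      Real.sqrt (Khat (x, x) - 2 * Khat (x, y) + Khat (y, y)) := by fun_prop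
  have h := hc.tendsto y
  have h0 : Khat (y, y) - 2 * Khat (y, y) + Khat (y, y) = 0 := by ring
  simpa only [h0, Real.sqrt_zero] using h
end

section
/- Let (X, d, μ) be a metric measure space (a compact metric space with a Borel probability measure) with d ∈ L²(X × X, μ ⊗ μ) and supp(μ) = X. Define K_A(x, s) = -(1/2) d(x, s)² and the doubly centered kernel K_B(x, s) = K_A(x, s) - ∫_X K_A(w, s) μ(dw) - ∫_X K_A(x, z) μ(dz) + ∫_X ∫_X K_A(w, z) μ(dw) μ(dz). Then X is Euclidean — i.e. there exists an isometric embedding of (X, d) into the Hilbert space ℓ² of square-summable real sequences — if and only if the integral operator T_{K_B} on L²(X, μ) is positive semi-definite, i.e. ∫_X ∫_X K_B(x, s) f(x) f(s) μ(dx) μ(ds) ≥ 0 for every f ∈ L²(X, μ). -/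
open MeasureTheory

namespace EucMM

lemma cont_int {X E : Type*} [MetricSpace X] [CompactSpace X]
    [MeasurableSpace X] [BorelSpace X] [NormedAddCommGroup E]
    (μ : Measure X) [IsProbabilityMeasure μ] {g : X → E} (hg : Continuous g) :
    Integrable g μ :=
  hg.integrable_of_hasCompactSupport (HasCompactSupport.of_compactSpace g)

lemma forward {X : Type*} {E : Type*} [MetricSpace X] [CompactSpace X]
    [MeasurableSpace X] [BorelSpace X] [NormedAddCommGroup E] [InnerProductSpace ℝ E]
    [CompleteSpace E]
    (μ : Measure X) [IsProbabilityMeasure μ]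
    (KA KB : X → X → ℝ)
    (hKA : ∀ x s, KA x s = -(1/2) * (dist x s)^2)
    (hKB : ∀ x s, KB x s =
      KA x s - (∫ w, KA w s ∂μ) - (∫ z, KA x z ∂μ) + ∫ w, ∫ z, KA w z ∂μ ∂μ)
    (F : X → E) (hF : Isometry F) (f : X → ℝ) (hf : MemLp f 2 μ) :
    0 ≤ ∫ x, ∫ s, KB x s * f x * f s ∂μ ∂μ := by
  have hc := hF.continuous
  have hFi : Integrable F μ := cont_int μ hc
  have hNi : Integrable (fun x => ‖F x‖^2) μ := cont_int μ (by fun_prop)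
  set m := ∫ x, F x ∂μ with hm
  set M := ∫ x, ‖F x‖^2 ∂μ with hM
  have hA : ∀ x s, KA x s = inner ℝ (F x) (F s) - (1/2) * ‖F x‖^2 - (1/2) * ‖F s‖^2 := by
    intro x s
    rw [hKA, ← hF.dist_eq, dist_eq_norm, norm_sub_sq_real]; ring
  have h1 : ∀ x, ∫ z, KA x z ∂μ = inner ℝ (F x) m - (1/2) * ‖F x‖^2 - (1/2) * M := by
    intro x
    simp_rw [hA]
    rw [integral_sub (cont_int μ (by fun_prop)) (cont_int μ (by fun_prop)),
      integral_sub (cont_int μ (by fun_prop)) (cont_int μ (by fun_prop)),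
      integral_inner hFi, integral_const_mul]
    rw [integral_const_mul]
    simp [hM, hm]
  have hsymm : ∀ x s, KA x s = KA s x := by
    intro x s; rw [hKA, hKA, dist_comm]
  have h2 : ∫ w, ∫ z, KA w z ∂μ ∂μ = inner ℝ m m - M := by
    simp_rw [h1]
    rw [integral_sub (cont_int μ (by fun_prop)) (cont_int μ (by fun_prop)),
      integral_sub (cont_int μ (by fun_prop)) (cont_int μ (by fun_prop)),
      integral_const_mul]
    simp_rw [real_inner_comm m]
    rw [integral_inner hFi]
    simp [← hM, ← hm]; ring
  have hB : ∀ x s, KB x s = inner ℝ (F x - m) (F s - m) := by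
    intro x s
    rw [hKB, h2, h1]
    simp_rw [hsymm _ s]
    rw [h1, hA, inner_sub_left, inner_sub_right, inner_sub_right, real_inner_comm m (F s)]
    rw [real_inner_comm (F x) (F s)]
    ring
  obtain ⟨C, hC⟩ : ∃ C, ∀ x, ‖F x - m‖ ≤ C := by
    obtain ⟨C, hC⟩ := (isCompact_range (f := fun x => F x - m) (by fun_prop)).isBounded.exists_norm_le
    exact ⟨C, fun x => hC _ ⟨x, rfl⟩⟩
  have hfi : Integrable f μ := hf.integrable (by norm_num)
  have hgi : Integrable (fun x => f x • (F x - m)) μ :=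
    hfi.smul_bdd (f := fun x => F x - m) C (cont_int μ (by fun_prop)).aestronglyMeasurable
      (Filter.Eventually.of_forall hC)
  have : ∀ x s, KB x s * f x * f s = inner ℝ (f x • (F x - m)) (f s • (F s - m)) := by
    intro x s
    rw [hB, inner_smul_left, inner_smul_right]; simp; ring
  simp_rw [this]
  simp_rw [integral_inner hgi]
  simp_rw [real_inner_comm (∫ x, f x • (F x - m) ∂μ)]
  rw [integral_inner hgi]
  exact real_inner_self_nonneg

lemma exists_bump {X : Type*} [MetricSpace X] [CompactSpace X]
    [MeasurableSpace X] [BorelSpace X]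
    (μ : Measure X) [IsProbabilityMeasure μ] [μ.IsOpenPosMeasure] {δ : ℝ} (hδ : 0 < δ) (x : X) :
    ∃ φ : X → ℝ, Continuous φ ∧ (∀ u, 0 ≤ φ u) ∧ ∫ u, φ u ∂μ = 1 ∧
      ∀ u, φ u ≠ 0 → dist u x < δ := by
  set ψ : X → ℝ := fun u => max 0 (δ - dist u x) with hψ
  have hc : Continuous ψ := by fun_prop
  have hpos : 0 < ∫ u, ψ u ∂μ := by
    refine hc.integral_pos_of_hasCompactSupport_nonneg_nonzero (x := x)
      (HasCompactSupport.of_compactSpace _) (fun u => le_max_left _ _) ?_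
    simp [hψ, hδ.le, hδ.ne']
  refine ⟨fun u => ψ u / ∫ u, ψ u ∂μ, by fun_prop, fun u => div_nonneg (le_max_left _ _) hpos.le,
    ?_, ?_⟩
  · rw [integral_div, div_self hpos.ne']
  · intro u hu
    by_contra h
    apply hu
    have : ψ u = 0 := max_eq_left (by linarith)
    simp [this]

lemma avg {X : Type*} [MetricSpace X] [CompactSpace X]
    [MeasurableSpace X] [BorelSpace X]
    (μ : Measure X) [IsProbabilityMeasure μ] {φ h : X → ℝ} (hφ : Continuous φ) (hh : Continuous h)
    (h0 : ∀ u, 0 ≤ φ u) (h1 : ∫ u, φ u ∂μ = 1) {a ε : ℝ}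
    (ha : ∀ u, φ u ≠ 0 → |h u - a| ≤ ε) : |∫ u, h u * φ u ∂μ - a| ≤ ε := by
  have e : ∫ u, h u * φ u ∂μ - a = ∫ u, (h u - a) * φ u ∂μ := by
    simp_rw [sub_mul]
    rw [integral_sub (cont_int μ (by fun_prop)) (cont_int μ (by fun_prop)),
      integral_const_mul, h1, mul_one]
  have e2 : ε = ∫ u, ε * φ u ∂μ := by rw [integral_const_mul, h1, mul_one]
  rw [e, e2, ← Real.norm_eq_abs]
  refine norm_integral_le_of_norm_le (cont_int μ (by fun_prop)) (Filter.Eventually.of_forall ?_)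
  intro u
  rw [norm_mul, Real.norm_eq_abs, Real.norm_eq_abs, abs_of_nonneg (h0 u)]
  by_cases hu : φ u = 0
  · simp [hu]
  · exact mul_le_mul_of_nonneg_right (ha u hu) (h0 u)

lemma cont_param {X : Type*} [MetricSpace X] [CompactSpace X]
    [MeasurableSpace X] [BorelSpace X]
    (μ : Measure X) [IsProbabilityMeasure μ] {K : X → X → ℝ}
    (hK : Continuous (Function.uncurry K)) : Continuous fun u => ∫ v, K u v ∂μ := by
  have := continuous_parametric_integral_of_continuous (μ := μ) hK (isCompact_univ)
  simpa using this

lemma pointwise {X : Type*} [MetricSpace X] [CompactSpace X]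
    [MeasurableSpace X] [BorelSpace X]
    (μ : Measure X) [IsProbabilityMeasure μ] [μ.IsOpenPosMeasure] (K : X → X → ℝ)
    (hK : Continuous (Function.uncurry K))
    (hp : ∀ f : X → ℝ, MemLp f 2 μ → 0 ≤ ∫ x, ∫ s, K x s * f x * f s ∂μ ∂μ)
    (s : Finset X) (c : X → ℝ) : 0 ≤ ∑ x ∈ s, ∑ y ∈ s, c x * c y * K x y := by
  have key : ∀ ε > 0, -(ε * ∑ x ∈ s, ∑ y ∈ s, |c x * c y|) ≤
      ∑ x ∈ s, ∑ y ∈ s, c x * c y * K x y := by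
    intro ε hε
    have huc := CompactSpace.uniformContinuous_of_continuous hK
    obtain ⟨δ, hδ, hd⟩ := Metric.uniformContinuous_iff.1 huc ε hε
    choose φ hφc hφ0 hφ1 hφd using exists_bump μ hδ
    have hφc' : ∀ x, Continuous (φ x) := hφc
    set f : X → ℝ := fun u => ∑ x ∈ s, c x * φ x u with hf
    have hfc : Continuous f := by fun_prop
    have hfm : MemLp f 2 μ := hfc.memLp_of_hasCompactSupport (HasCompactSupport.of_compactSpace _)
    have h := hp f hfm
    have hKu : ∀ u, Continuous (K u) := fun u => hK.comp (Continuous.prodMk_right u)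
    have hcp : ∀ y, Continuous fun u => ∫ v, K u v * φ y v ∂μ := fun y =>
      cont_param μ (K := fun u v => K u v * φ y v)
        (hK.mul ((hφc' y).comp continuous_snd))
    have hin : ∀ u, ∫ v, K u v * f u * f v ∂μ =
        ∑ x ∈ s, ∑ y ∈ s, (c x * c y) * ((∫ v, K u v * φ y v ∂μ) * φ x u) := by
      intro u
      have : ∀ v, K u v * f u * f v = ∑ y ∈ s, (f u * c y) * (K u v * φ y v) := by
        intro v
        simp only [hf]
        rw [Finset.mul_sum]
        exact Finset.sum_congr rfl fun y _ => by ring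
      simp_rw [this]
      rw [integral_finsetSum]
      swap
      · intro y _
        have := hKu u
        have := hφc' y
        exact cont_int μ (by fun_prop)
      rw [Finset.sum_comm]
      refine Finset.sum_congr rfl fun y _ => ?_
      rw [integral_const_mul]
      simp only [hf]
      rw [Finset.sum_mul, Finset.sum_mul]
      exact Finset.sum_congr rfl fun y _ => by ring
    have hall : ∫ u, ∫ v, K u v * f u * f v ∂μ ∂μ =
        ∑ x ∈ s, ∑ y ∈ s, (c x * c y) * ∫ u, (∫ v, K u v * φ y v ∂μ) * φ x u ∂μ := by
      simp_rw [hin]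
      have hci : ∀ x y, Continuous
          fun u => (c x * c y) * ((∫ v, K u v * φ y v ∂μ) * φ x u) := by
        intro x y
        exact continuous_const.mul ((hcp y).mul (hφc' x))
      rw [integral_finsetSum _ fun x _ => cont_int μ (continuous_finsetSum _ fun y _ => hci x y)]
      refine Finset.sum_congr rfl fun x _ => ?_
      rw [integral_finsetSum _ fun y _ => cont_int μ (hci x y)]
      refine Finset.sum_congr rfl fun y _ => ?_
      rw [integral_const_mul]
    have hest : ∀ x y, |∫ u, (∫ v, K u v * φ y v ∂μ) * φ x u ∂μ - K x y| ≤ ε := by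
      intro x y
      refine avg μ (hφc' x) (hcp y) (hφ0 x) (hφ1 x) fun u hu => ?_
      refine avg μ (hφc' y) (hKu u) (hφ0 y) (hφ1 y) fun v hv => ?_
      have := hd (a := (u, v)) (b := (x, y)) (by
        rw [Prod.dist_eq]; exact max_lt (hφd x u hu) (hφd y v hv))
      exact this.le
    rw [hall] at h
    have : ∑ x ∈ s, ∑ y ∈ s, (c x * c y) * (∫ u, (∫ v, K u v * φ y v ∂μ) * φ x u ∂μ)
        ≤ ∑ x ∈ s, ∑ y ∈ s, (c x * c y * K x y + ε * |c x * c y|) := by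
      refine Finset.sum_le_sum fun x _ => Finset.sum_le_sum fun y _ => ?_
      have h3 := hest x y
      have h4 : (c x * c y) * (∫ u, (∫ v, K u v * φ y v ∂μ) * φ x u ∂μ - K x y) ≤
          |c x * c y| * ε :=
        (le_abs_self _).trans (by
          rw [abs_mul]; exact mul_le_mul_of_nonneg_left h3 (abs_nonneg _))
      linarith
    simp_rw [Finset.sum_add_distrib, ← Finset.mul_sum] at this
    linarith
  set S := ∑ x ∈ s, ∑ y ∈ s, |c x * c y| with hS
  have hS0 : 0 ≤ S := Finset.sum_nonneg fun x _ => Finset.sum_nonneg fun y _ => abs_nonneg _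
  refine le_of_forall_pos_le_add fun η hη => ?_
  have := key (η / (S + 1)) (by positivity)
  have h5 : η / (S + 1) * S ≤ η := by
    rw [div_mul_eq_mul_div, div_le_iff₀ (by positivity)]; nlinarith
  linarith

/-- A real Hilbert space which is separable embeds in `ℓ²(ℕ)`. -/
lemma exists_embed (H : Type*) [NormedAddCommGroup H] [InnerProductSpace ℝ H] [CompleteSpace H]
    [TopologicalSpace.SeparableSpace H] :
    ∃ Φ : H → lp (fun _ : ℕ => ℝ) 2, Isometry Φ := by
  obtain ⟨w, b, hb⟩ := exists_hilbertBasis ℝ H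
  have hw : Countable w := by
    have : Pairwise fun i j : w => 1 ≤ dist (b i) (b j) := by
      intro i j hij
      have ho := b.orthonormal
      have h2 : dist (b i) (b j) ^ 2 = 2 := by
        rw [dist_eq_norm, norm_sub_sq_real, ho.1, ho.1, ho.2 hij]; norm_num
      nlinarith [dist_nonneg (x := b i) (y := b j)]
    have hdis : Pairwise (Function.onFun Disjoint fun i : w => Metric.ball (b i) (1/2)) := by
      intro i j hij
      exact Metric.ball_disjoint_ball (by have := this hij; linarith)
    exact Pairwise.countable_of_isOpen_disjoint (s := fun i : w => Metric.ball (b i) (1/2)) hdis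
      (fun i => Metric.isOpen_ball) (fun i => ⟨b i, by simp⟩)
  obtain ⟨e, he⟩ := hw.exists_injective_nat
  let B : HilbertBasis ℕ ℝ (lp (fun _ : ℕ => ℝ) 2) := ⟨LinearIsometryEquiv.refl ℝ _⟩
  have ho : Orthonormal ℝ (fun i : w => B (e i)) := B.orthonormal.comp e he
  exact ⟨fun x => ho.orthogonalFamily.linearIsometry (b.repr x),
    (LinearIsometry.isometry _).comp b.repr.isometry⟩

lemma backward {X : Type*} [MetricSpace X] [CompactSpace X]
    (K : X → X → ℝ) (hs : ∀ x y, K x y = K y x)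
    (hd : ∀ x y, K x x + K y y - 2 * K x y = dist x y ^ 2)
    (hp : ∀ (s : Finset X) (c : X → ℝ), 0 ≤ ∑ x ∈ s, ∑ y ∈ s, c x * c y * K x y) :
    ∃ F : X → lp (fun _ : ℕ => ℝ) 2, Isometry F := by
  let A : Matrix X X (ℝ →L[ℝ] ℝ) := .of fun x y => K x y • ContinuousLinearMap.id ℝ ℝ
  have hA : A.PosSemidef := by
    have htf := (RKHS.posSemidef_tfae (K := A)).out 0 2
    refine htf.mpr ⟨?_, ?_⟩
    · ext x y
      simp [A, hs x y, Matrix.conjTranspose_apply, star_smul]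
      have h1 : star (ContinuousLinearMap.id ℝ ℝ) = ContinuousLinearMap.id ℝ ℝ :=
        star_one (ℝ →L[ℝ] ℝ)
      rw [h1]; simp
    · intro vv
      have := hp vv.support vv
      simp only [A, Finsupp.sum, Matrix.of_apply]
      refine this.trans_eq ?_
      simp only [RCLike.re_to_real]
      refine Finset.sum_congr rfl fun x _ => Finset.sum_congr rfl fun y _ => ?_
      simp [hs x y]; ring
  have : Fact A.PosSemidef := ⟨hA⟩
  let H := RKHS.OfKernel A
  let G : X → H := fun x => RKHS.kerFun H x (1 : ℝ)
  have hG : ∀ x y, inner ℝ (G x) (G y) = K x y := by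
    intro x y
    have := RKHS.kernel_inner H y x (1 : ℝ) (1 : ℝ)
    rw [RKHS.OfKernel.kernel_ofKernel] at this
    rw [← this]
    simp [A, hs x y]
  have hGi : Isometry G := by
    refine Isometry.of_dist_eq fun x y => ?_
    have : dist (G x) (G y) ^ 2 = dist x y ^ 2 := by
      rw [dist_eq_norm, norm_sub_sq_real, ← real_inner_self_eq_norm_sq,
        ← real_inner_self_eq_norm_sq, hG, hG, hG, ← hd]; ring
    exact (sq_eq_sq₀ dist_nonneg dist_nonneg).1 this
  have : TopologicalSpace.SeparableSpace H := by
    rw [← TopologicalSpace.isSeparable_univ_iff]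
    have h1 : TopologicalSpace.IsSeparable (Set.range G) :=
      TopologicalSpace.isSeparable_range hGi.continuous
    have h2 := (h1.span (R := ℝ)).closure
    refine h2.mono ?_
    have h3 := RKHS.kerFun_dense H
    have h4 : Submodule.span ℝ {RKHS.kerFun H x v | (x : X) (v : ℝ)} ≤
        Submodule.span ℝ (Set.range G) := by
      rw [Submodule.span_le]
      rintro _ ⟨x, v, rfl⟩
      have : RKHS.kerFun H x v = v • G x := by
        simp only [G]; rw [← map_smul]; simp
      rw [this]
      exact Submodule.smul_mem _ _ (Submodule.subset_span ⟨x, rfl⟩)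
    intro z _
    have hz : z ∈ (Submodule.span ℝ {RKHS.kerFun H x v | (x : X) (v : ℝ)}).topologicalClosure := by
      rw [h3]; trivial
    exact closure_mono h4 hz
  obtain ⟨Φ, hΦ⟩ := exists_embed H
  exact ⟨Φ ∘ G, hΦ.comp hGi⟩

end EucMM

/-- **Theorem.**  A metric measure space `(X, d, μ)` (compact, with a fully
supported Borel probability measure, `d ∈ L²(μ ⊗ μ)`) embeds isometrically into
`ℓ²` if and only if the doubly centered integral operator `T_{K_B}` is positive
semi-definite on `L²(X, μ)`. -/
theorem metric_measure_space_euclidean_iff_posSemidef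
    {X : Type*} [MetricSpace X] [CompactSpace X]
    [MeasurableSpace X] [BorelSpace X]
    (μ : Measure X) [IsProbabilityMeasure μ] [μ.IsOpenPosMeasure]
    (hdL2 : MemLp (fun p : X × X => dist p.1 p.2) 2 (μ.prod μ))
    (KA KB : X → X → ℝ)
    (hKA : ∀ x s, KA x s = -(1/2) * (dist x s)^2)
    (hKB : ∀ x s, KB x s =
      KA x s - (∫ w, KA w s ∂μ) - (∫ z, KA x z ∂μ) + ∫ w, ∫ z, KA w z ∂μ ∂μ) :
    (∃ F : X → lp (fun _ : ℕ => ℝ) 2, Isometry F) ↔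
      (∀ f : X → ℝ, MemLp f 2 μ →
        0 ≤ ∫ x, ∫ s, KB x s * f x * f s ∂μ ∂μ) := by
  constructor
  · rintro ⟨F, hF⟩ f hf
    exact EucMM.forward μ KA KB hKA hKB F hF f hf
  · intro hp
    have hsA : ∀ x s, KA x s = KA s x := fun x s => by rw [hKA, hKA, dist_comm]
    have hcA : Continuous (Function.uncurry KA) := by
      have : Function.uncurry KA = fun p : X × X => -(1/2) * (dist p.1 p.2)^2 := by
        ext ⟨x, s⟩; exact hKA x s
      rw [this]; fun_prop
    have hcp := EucMM.cont_param μ hcA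
    have hB : ∀ x s, KB x s =
        KA x s - (∫ z, KA s z ∂μ) - (∫ z, KA x z ∂μ) + ∫ w, ∫ z, KA w z ∂μ ∂μ := by
      intro x s
      rw [hKB]
      simp_rw [hsA _ s]
    have hcB : Continuous (Function.uncurry KB) := by
      have : Function.uncurry KB = fun p : X × X => Function.uncurry KA p -
          (∫ z, KA p.2 z ∂μ) - (∫ z, KA p.1 z ∂μ) + ∫ w, ∫ z, KA w z ∂μ ∂μ := by
        ext ⟨x, s⟩; exact hB x s
      rw [this]
      exact ((hcA.sub (hcp.comp continuous_snd)).sub (hcp.comp continuous_fst)).add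
        continuous_const
    refine EucMM.backward KB (fun x y => ?_) (fun x y => ?_)
      (EucMM.pointwise μ KB hcB hp)
    · rw [hB, hB, hsA x y]; ring
    · rw [hB, hB, hB, hKA x x, hKA y y, hKA x y]; simp; ring
end

section
/- Let (X, μ) be a probability measure space and let K_B ∈ L²(X × X, μ ⊗ μ) be a symmetric kernel admitting a spectral decomposition K_B(x, s) = Σ_{i=1}^∞ λ_i φ_i(x) φ_i(s) in L²(μ ⊗ μ), where λ_i ∈ ℝ with Σ λ_i² < ∞ and {φ_i} is an orthonormal system in L²(X, μ). Define K_B̂(x, s) = Σ_i max(λ_i, 0) φ_i(x) φ_i(s). Then for every symmetric positive semi-definite kernel K' ∈ L²(X × X, μ ⊗ μ) (meaning ∫∫ K'(x, s) f(x) f(s) dμ dμ ≥ 0 for all f ∈ L²(μ)), the strain satisfies ∫_X ∫_X (K_B(x, s) - K'(x, s))² μ(dx) μ(ds) ≥ Σ_i (min(λ_i, 0))², with equality attained at K' = K_B̂. In other words, the strain is minimized over all positive semi-definite kernels by the kernel of the MDS embedding. -/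
open MeasureTheory Filter

section MDSHelpers

variable {X : Type*} [MeasurableSpace X] {μ : Measure X} [IsProbabilityMeasure μ]

lemma mds_memLp_tensor {f : X → ℝ} (hf : MemLp f 2 μ) :
    MemLp (fun p : X × X => f p.1 * f p.2) 2 (μ.prod μ) := by
  have hm : AEStronglyMeasurable (fun p : X × X => f p.1 * f p.2) (μ.prod μ) :=
    hf.1.comp_fst.mul hf.1.comp_snd
  rw [memLp_two_iff_integrable_sq hm]
  have h := hf.integrable_sq.mul_prod hf.integrable_sq
  refine h.congr (Eventually.of_forall fun p => ?_)
  simp only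
  ring

lemma mds_inner_toLp {Y : Type*} [MeasurableSpace Y] {ν : Measure Y} {F G : Y → ℝ}
    (hF : MemLp F 2 ν) (hG : MemLp G 2 ν) :
    inner ℝ (hF.toLp F) (hG.toLp G) = ∫ y, F y * G y ∂ν := by
  rw [L2.inner_def]
  refine integral_congr_ae ?_
  filter_upwards [hF.coeFn_toLp, hG.coeFn_toLp] with y h1 h2
  rw [h1, h2]
  simp [mul_comm]

lemma mds_norm_sq {Y : Type*} [MeasurableSpace Y] {ν : Measure Y} {F : Y → ℝ}
    (hF : MemLp F 2 ν) : ‖hF.toLp F‖ ^ 2 = ∫ y, F y ^ 2 ∂ν := by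
  rw [← real_inner_self_eq_norm_sq, mds_inner_toLp]
  simp only [sq]

/-- The rank one kernel `f ⊗ f` in `L²`. -/
noncomputable def mdsT (f : X → ℝ) (hf : MemLp f 2 μ) : Lp ℝ 2 (μ.prod μ) :=
  (mds_memLp_tensor hf).toLp _

lemma mds_inner_T {f g : X → ℝ} (hf : MemLp f 2 μ) (hg : MemLp g 2 μ) :
    inner ℝ (mdsT f hf) (mdsT g hg) = (∫ x, f x * g x ∂μ) ^ 2 := by
  unfold mdsT
  rw [mds_inner_toLp, sq, ← integral_prod_mul]
  congr 1
  ext p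
  ring

lemma mds_inner_kernel {K : X × X → ℝ} {f : X → ℝ} (hK : MemLp K 2 (μ.prod μ))
    (hf : MemLp f 2 μ) :
    inner ℝ (hK.toLp K) (mdsT f hf) = ∫ x, ∫ s, K (x, s) * f x * f s ∂μ ∂μ := by
  unfold mdsT
  rw [mds_inner_toLp, integral_prod]
  · simp only [mul_assoc]
  · exact MemLp.integrable_mul hK (mds_memLp_tensor hf)

lemma mds_memLp_sum (c : ℕ → ℝ) (φ : ℕ → X → ℝ) (hφ : ∀ i, MemLp (φ i) 2 μ) (N : ℕ) :
    MemLp (fun p : X × X => ∑ i ∈ Finset.range N, c i * φ i p.1 * φ i p.2) 2 (μ.prod μ) := by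
  refine memLp_finsetSum _ fun i _ => ?_
  simpa only [mul_assoc] using (mds_memLp_tensor (hφ i)).const_mul (c i)

lemma mds_toLp_sum (c : ℕ → ℝ) (φ : ℕ → X → ℝ) (hφ : ∀ i, MemLp (φ i) 2 μ) (N : ℕ) :
    (mds_memLp_sum c φ hφ N).toLp _ = ∑ i ∈ Finset.range N, c i • mdsT (φ i) (hφ i) := by
  induction N with
  | zero =>
    simp only [Finset.range_zero, Finset.sum_empty]
    exact MemLp.toLp_zero _
  | succ N ih =>
    rw [Finset.sum_range_succ, ← ih]
    unfold mdsT
    rw [← MemLp.toLp_const_smul, ← MemLp.toLp_add]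
    refine MemLp.toLp_congr _ _ (Eventually.of_forall fun p => ?_)
    simp [Finset.sum_range_succ, mul_assoc]

lemma mds_tendsto_iff {K : X × X → ℝ} (hK : MemLp K 2 (μ.prod μ))
    (c : ℕ → ℝ) (φ : ℕ → X → ℝ) (hφ : ∀ i, MemLp (φ i) 2 μ) :
    Tendsto (fun N : ℕ => ∫ p, (K p - ∑ i ∈ Finset.range N, c i * φ i p.1 * φ i p.2)^2
      ∂(μ.prod μ)) atTop (nhds 0) ↔
    Tendsto (fun N : ℕ => ∑ i ∈ Finset.range N, c i • mdsT (φ i) (hφ i)) atTop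
      (nhds (hK.toLp K)) := by
  have h : ∀ N : ℕ, ∫ p, (K p - ∑ i ∈ Finset.range N, c i * φ i p.1 * φ i p.2)^2 ∂(μ.prod μ)
      = ‖(∑ i ∈ Finset.range N, c i • mdsT (φ i) (hφ i)) - hK.toLp K‖ ^ 2 := by
    intro N
    rw [norm_sub_rev, ← mds_toLp_sum, ← MemLp.toLp_sub, mds_norm_sq]
    rfl
  simp only [h]
  constructor
  · intro h
    rw [tendsto_iff_norm_sub_tendsto_zero]
    have := h.sqrt
    simpa using this
  · intro h
    rw [tendsto_iff_norm_sub_tendsto_zero] at h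
    simpa using h.pow 2

end MDSHelpers

lemma mds_hasSum {H : Type*} [NormedAddCommGroup H] [InnerProductSpace ℝ H] [CompleteSpace H]
    {e : ℕ → H} (he : Orthonormal ℝ e) {c : ℕ → ℝ} (hc : Summable fun i => c i ^ 2) :
    ∃ v, HasSum (fun i => c i • e i) v := by
  have := (he.orthogonalFamily.summable_iff_norm_sq_summable c).2 (by simpa using hc)
  exact ⟨_, by simpa using this.hasSum⟩

lemma mds_hasSum_inner {H : Type*} [NormedAddCommGroup H] [InnerProductSpace ℝ H]
    {e : ℕ → H} {c : ℕ → ℝ} {v : H} (hv : HasSum (fun i => c i • e i) v) (w : H) :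
    HasSum (fun i => c i * inner ℝ (e i) w) (inner ℝ v w) := by
  have := hv.mapL (innerSL ℝ w)
  simpa [real_inner_comm, inner_smul_right, inner_smul_left] using this

lemma mds_coeff {H : Type*} [NormedAddCommGroup H] [InnerProductSpace ℝ H]
    {e : ℕ → H} (he : Orthonormal ℝ e) {c : ℕ → ℝ} {v : H}
    (hv : HasSum (fun i => c i • e i) v) (j : ℕ) : inner ℝ v (e j) = c j := by
  have h := mds_hasSum_inner hv (e j)
  have h2 := hasSum_single (f := fun i => c i * inner ℝ (e i) (e j)) j (fun i hi => by
    simp [he.2 hi])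
  rw [h.unique h2]
  simp [he.1 j]

lemma mds_norm {H : Type*} [NormedAddCommGroup H] [InnerProductSpace ℝ H]
    {e : ℕ → H} (he : Orthonormal ℝ e) {c : ℕ → ℝ} {v : H}
    (hv : HasSum (fun i => c i • e i) v) : ‖v‖ ^ 2 = ∑' i, c i ^ 2 := by
  have h := mds_hasSum_inner hv v
  rw [← real_inner_self_eq_norm_sq, ← h.tsum_eq]
  congr 1
  ext i
  rw [real_inner_comm, mds_coeff he hv, sq]


/-- **Theorem (strain minimization for infinite MDS).**  Let `K_B` be a
symmetric `L²` kernel with spectral decomposition `K_B = ∑ᵢ λᵢ φᵢ ⊗ φᵢ`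
(converging in `L²(μ ⊗ μ)`, with `∑ λᵢ² < ∞` and `φᵢ` orthonormal).  Then the
strain `∫∫ (K_B − K')² dμ dμ` over all symmetric positive semi-definite `L²`
kernels `K'` is at least `∑ᵢ (min(λᵢ, 0))²`, and this bound is attained at the
kernel `K_B̂ = ∑ᵢ max(λᵢ, 0) φᵢ ⊗ φᵢ` of the MDS embedding. -/
theorem infinite_mds_strain_minimization
    {X : Type*} [MeasurableSpace X] (μ : Measure X) [IsProbabilityMeasure μ]
    (KB : X × X → ℝ) (hKBL2 : MemLp KB 2 (μ.prod μ))
    (hKBsymm : ∀ x s : X, KB (x, s) = KB (s, x))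
    (lam : ℕ → ℝ) (hsq : Summable (fun i => (lam i)^2))
    (φ : ℕ → X → ℝ) (hφL2 : ∀ i, MemLp (φ i) 2 μ)
    (hortho : ∀ i j : ℕ, ∫ x, φ i x * φ j x ∂μ = if i = j then 1 else 0)
    (hdecomp : Tendsto
      (fun N : ℕ => ∫ p, (KB p - ∑ i ∈ Finset.range N, lam i * φ i p.1 * φ i p.2)^2 ∂(μ.prod μ))
      atTop (nhds 0)) :
    (∀ K' : X × X → ℝ, MemLp K' 2 (μ.prod μ) →
      (∀ x s : X, K' (x, s) = K' (s, x)) →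
      (∀ f : X → ℝ, MemLp f 2 μ → 0 ≤ ∫ x, ∫ s, K' (x, s) * f x * f s ∂μ ∂μ) →
      (∑' i : ℕ, (min (lam i) 0)^2) ≤ ∫ p, (KB p - K' p)^2 ∂(μ.prod μ)) ∧
    (∃ Khat : X × X → ℝ, MemLp Khat 2 (μ.prod μ) ∧
      (∀ x s : X, Khat (x, s) = Khat (s, x)) ∧
      (∀ f : X → ℝ, MemLp f 2 μ → 0 ≤ ∫ x, ∫ s, Khat (x, s) * f x * f s ∂μ ∂μ) ∧
      Tendsto
        (fun N : ℕ => ∫ p, (Khat p - ∑ i ∈ Finset.range N, max (lam i) 0 * φ i p.1 * φ i p.2)^2 ∂(μ.prod μ))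
        atTop (nhds 0) ∧
      ∫ p, (KB p - Khat p)^2 ∂(μ.prod μ) = ∑' i : ℕ, (min (lam i) 0)^2) := by
  have he : Orthonormal ℝ (fun i => mdsT (φ i) (hφL2 i)) := by
    rw [orthonormal_iff_ite]
    intro i j
    rw [mds_inner_T, hortho]
    split_ifs <;> simp
  have hsqmax : Summable fun i => (max (lam i) 0) ^ 2 := by
    refine Summable.of_nonneg_of_le (fun i => sq_nonneg _) (fun i => ?_) hsq
    rcases le_total (lam i) 0 with h | h <;> simp [h, sq_nonneg]
  have hKB : HasSum (fun i => lam i • mdsT (φ i) (hφL2 i)) (hKBL2.toLp KB) := by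
    obtain ⟨v, hv⟩ := mds_hasSum he hsq
    rwa [tendsto_nhds_unique ((mds_tendsto_iff hKBL2 lam φ hφL2).1 hdecomp) hv.tendsto_sum_nat]
  constructor
  · intro Kp hKp _ hpsd
    have h1 : ∫ p, (KB p - Kp p)^2 ∂(μ.prod μ) = ‖hKBL2.toLp KB - hKp.toLp Kp‖ ^ 2 := by
      rw [← MemLp.toLp_sub, mds_norm_sq]
      rfl
    rw [h1]
    refine le_trans ?_ (he.tsum_inner_products_le (hKBL2.toLp KB - hKp.toLp Kp))
    have hle : ∀ i, (min (lam i) 0) ^ 2 ≤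
        ‖inner ℝ (mdsT (φ i) (hφL2 i)) (hKBL2.toLp KB - hKp.toLp Kp)‖ ^ 2 := by
      intro i
      have hc : 0 ≤ inner ℝ (hKp.toLp Kp) (mdsT (φ i) (hφL2 i)) := by
        rw [mds_inner_kernel]
        exact hpsd _ (hφL2 i)
      rw [real_inner_comm, inner_sub_left, mds_coeff he hKB, Real.norm_eq_abs, sq_abs]
      rcases le_total (lam i) 0 with h | h
      · rw [min_eq_left h]
        nlinarith
      · rw [min_eq_right h]
        simpa using sq_nonneg _
    have hs := he.inner_products_summable (hKBL2.toLp KB - hKp.toLp Kp)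
    exact (Summable.of_nonneg_of_le (fun i => sq_nonneg _) hle hs).tsum_le_tsum hle hs
  · obtain ⟨v, hv⟩ := mds_hasSum he hsqmax
    have hsw : MeasurePreserving (Prod.swap : X × X → X × X) (μ.prod μ) (μ.prod μ) :=
      Measure.measurePreserving_swap
    have hswv : Lp.compMeasurePreserving Prod.swap hsw v = v := by
      have h := hv.mapL (Lp.compMeasurePreservingₗᵢ ℝ (E := ℝ) (p := 2)
        Prod.swap hsw).toContinuousLinearMap
      have h2 : ∀ i, (Lp.compMeasurePreservingₗᵢ ℝ (E := ℝ) (p := 2)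
          Prod.swap hsw).toContinuousLinearMap (mdsT (φ i) (hφL2 i)) = mdsT (φ i) (hφL2 i) := by
        intro i
        change Lp.compMeasurePreserving Prod.swap hsw (mdsT (φ i) (hφL2 i)) = _
        unfold mdsT
        rw [Lp.toLp_compMeasurePreserving]
        refine MemLp.toLp_congr _ _ (Eventually.of_forall fun p => ?_)
        simp [mul_comm]
      simp only [map_smul, h2] at h
      exact h.unique hv
    have hvae : ∀ᵐ p ∂(μ.prod μ), v p.swap = v p := by
      have h := Lp.coeFn_compMeasurePreserving v hsw
      rw [hswv] at h
      filter_upwards [h] with p hp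
      exact hp.symm
    have hae : (v : X × X → ℝ) =ᵐ[μ.prod μ] fun p => (v p + v p.swap) / 2 := by
      filter_upwards [hvae] with p hp
      rw [hp]
      ring
    have hKh : MemLp (fun p : X × X => (v p + v p.swap) / 2) 2 (μ.prod μ) :=
      (memLp_congr_ae hae).1 (Lp.memLp v)
    have hKhv : hKh.toLp _ = v := by
      rw [← MemLp.toLp_congr (Lp.memLp v) hKh hae, Lp.toLp_coeFn]
    refine ⟨fun p => (v p + v p.swap) / 2, hKh, ?_, ?_, ?_, ?_⟩
    · intro x s
      simp [add_comm]
    · intro f hf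
      rw [← mds_inner_kernel hKh hf, hKhv]
      refine (mds_hasSum_inner hv (mdsT f hf)).nonneg fun i => ?_
      rw [mds_inner_T]
      positivity
    · rw [mds_tendsto_iff hKh (fun i => max (lam i) 0) φ hφL2, hKhv]
      exact hv.tendsto_sum_nat
    · have h1 : ∫ p, (KB p - (v p + v p.swap) / 2)^2 ∂(μ.prod μ)
          = ‖hKBL2.toLp KB - hKh.toLp _‖ ^ 2 := by
        rw [← MemLp.toLp_sub, mds_norm_sq]
        rfl
      rw [h1, hKhv]
      refine mds_norm he ?_
      convert hKB.sub hv using 2 with i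
      rw [← sub_smul]
      congr 1
      rcases le_total (lam i) 0 with h | h <;> simp [h]
end
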